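/- Let a > 0, let φ₁ : ℝ → ℝ be a 1-kink, and let H(r) = 2·arctan(exp(√2·r)) be the Sine-Gordon kink. Then φ₁(r) > H(r) for all r > 0, and φ₁(r) < H(r) for all r < 0. -/

import Mathlib

open Real Filter

/-- First-order form of the kink equation with the boundary conditions. -/
structure KinkSys (a : ℝ) (f p : ℝ → ℝ) : Prop where
  df : ∀ r, HasDerivAt f (p r) r
  dp : ∀ r, HasDerivAt p (Real.sin (2 * f r) - 2 * r / (r ^ 2 + a ^ 2) * p r) r
  bot : Tendsto f atBot (nhds 0)
  top : Tendsto f atTop (nhds Real.pi)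

theorem KinkSys.refl {a : ℝ} {f p : ℝ → ℝ} (h : KinkSys a f p) :
    KinkSys a (fun r => Real.pi - f (-r)) (fun r => p (-r)) := by
  refine ⟨fun r => ?_, fun r => ?_, ?_, ?_⟩
  · have h1 : HasDerivAt (fun r => f (-r)) (p (-r) * (-1)) r :=
      (h.df (-r)).comp r (hasDerivAt_neg r)
    have h2 := h1.const_sub Real.pi
    exact h2.congr_deriv (by ring)
  · have h1 : HasDerivAt (fun r => p (-r))
        ((Real.sin (2 * f (-r)) - 2 * (-r) / ((-r) ^ 2 + a ^ 2) * p (-r)) * (-1)) r :=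
      (h.dp (-r)).comp r (hasDerivAt_neg r)
    convert h1 using 1
    have : Real.sin (2 * (Real.pi - f (-r))) = - Real.sin (2 * f (-r)) := by
      rw [mul_sub, Real.sin_two_pi_sub]
    rw [this, neg_sq]
    ring
  · have := (h.top.comp tendsto_neg_atBot_atTop).const_sub Real.pi
    simpa using this
  · have := (h.bot.comp tendsto_neg_atTop_atBot).const_sub Real.pi
    simpa using this

/-- Energy derivative. -/
theorem KinkSys.dE {a : ℝ} {f p : ℝ → ℝ} (h : KinkSys a f p) (r : ℝ) :
    HasDerivAt (fun r => p r ^ 2 - 2 * Real.sin (f r) ^ 2)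
      (-(4 * r / (r ^ 2 + a ^ 2)) * p r ^ 2) r := by
  have h1 := ((h.dp r).pow 2).sub ((((h.df r).sin).pow 2).const_mul 2)
  refine h1.congr_deriv ?_
  rw [Real.sin_two_mul]
  push_cast
  ring

theorem d_bound {a : ℝ} (ha : 0 < a) (r : ℝ) : |2 * r / (r ^ 2 + a ^ 2)| ≤ 1 / a := by
  have : 0 < r ^ 2 + a ^ 2 := by positivity
  rw [abs_le]
  constructor
  · rw [neg_le_iff_add_nonneg, div_add_div _ _ this.ne' ha.ne']
    apply div_nonneg _ (by positivity)
    nlinarith [sq_nonneg (r + a)]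
  · rw [div_le_div_iff₀ this ha]
    nlinarith [sq_nonneg (r - a)]

theorem KinkSys.E_pos_right {a : ℝ} (ha : 0 < a) {f p : ℝ → ℝ} (h : KinkSys a f p)
    {r : ℝ} (hr : 0 ≤ r) : 0 < p r ^ 2 - 2 * Real.sin (f r) ^ 2 := by
  set E : ℝ → ℝ := fun r => p r ^ 2 - 2 * Real.sin (f r) ^ 2 with hE
  have hanti : AntitoneOn E (Set.Ici 0) := by
    apply antitoneOn_of_deriv_nonpos (convex_Ici 0)
    · exact fun x _ => (h.dE x).continuousAt.continuousWithinAt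
    · exact fun x _ => (h.dE x).differentiableAt.differentiableWithinAt
    · intro x hx
      rw [interior_Ici] at hx
      have hx' : 0 < x := hx
      rw [hE, (h.dE x).deriv]
      have : 0 ≤ 4 * x / (x ^ 2 + a ^ 2) * p x ^ 2 := by positivity
      linarith
  have hsin : Tendsto (fun x => 2 * Real.sin (f x) ^ 2) atTop (nhds 0) := by
    have := (((Real.continuous_sin.tendsto Real.pi).comp h.top).pow 2).const_mul 2
    simpa using this
  have hnn : ∀ x, 0 ≤ x → 0 ≤ E x := by
    intro x hx
    by_contra hlt
    push Not at hlt
    have h1 := hsin.eventually (gt_mem_nhds (show (0:ℝ) < - E x by linarith))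
    obtain ⟨y, hy1, hy2⟩ := (h1.and (eventually_ge_atTop x)).exists
    have h2 := hanti (Set.mem_Ici.2 hx) (Set.mem_Ici.2 (hx.trans hy2)) hy2
    have h3 : E y = p y ^ 2 - 2 * Real.sin (f y) ^ 2 := rfl
    nlinarith [sq_nonneg (p y)]
  by_contra hle
  have h0 : ∀ x, r ≤ x → E x = 0 := by
    intro x hx
    have h2 := hanti (Set.mem_Ici.2 hr) (Set.mem_Ici.2 (hr.trans hx)) hx
    have h3 := hnn x (hr.trans hx)
    have h4 : E r ≤ 0 := not_lt.1 hle
    linarith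
  have hp0 : ∀ x, r < x → p x = 0 := by
    intro x hx
    have h1 : HasDerivAt E 0 x := by
      apply (hasDerivAt_const x (0:ℝ)).congr_of_eventuallyEq
      filter_upwards [lt_mem_nhds hx] with y hy using h0 y hy.le
    have h2 := h1.unique (h.dE x)
    have hx0 : 0 < x := lt_of_le_of_lt hr hx
    have h3 : 4 * x / (x ^ 2 + a ^ 2) ≠ 0 := by positivity
    by_contra hp
    have : (4 * x / (x ^ 2 + a ^ 2)) * p x ^ 2 ≠ 0 := mul_ne_zero h3 (pow_ne_zero 2 hp)
    apply this
    linarith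
  set R := r + 1 with hR
  have hconst : ∀ x, R ≤ x → f x = f R := by
    intro x hx
    have h1 := constant_of_has_deriv_right_zero (f := f) (a := R) (b := x)
      (fun t _ => (h.df t).continuousAt.continuousWithinAt)
      (fun t ht => by
        have := (h.df t).hasDerivWithinAt (s := Set.Ici t)
        rwa [hp0 t (by linarith [ht.1])] at this)
    exact h1 x ⟨hx, le_rfl⟩
  have hfR : f R = Real.pi := by
    apply tendsto_nhds_unique _ h.top
    apply tendsto_const_nhds.congr'
    filter_upwards [eventually_ge_atTop R] with x hx using (hconst x hx).symm
  -- Gronwall to the left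
  set K := 3 + 2 / a with hK
  have hs : ∀ x, HasDerivAt (fun x => (p x ^ 2 + (f x - Real.pi) ^ 2) * Real.exp (K * x))
      ((2 * p x * (Real.sin (2 * f x) - 2 * x / (x ^ 2 + a ^ 2) * p x)
        + 2 * (f x - Real.pi) * p x) * Real.exp (K * x)
        + (p x ^ 2 + (f x - Real.pi) ^ 2) * (K * Real.exp (K * x))) x := by
    intro x
    have e1 : HasDerivAt (fun x => Real.exp (K * x)) (Real.exp (K * x) * (K * 1)) x :=
      ((hasDerivAt_id x).const_mul K).exp
    have := (((h.dp x).pow 2).add (((h.df x).sub_const Real.pi).pow 2)).mul e1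
    refine this.congr_deriv ?_
    simp only [Pi.add_apply, Pi.pow_apply]
    push_cast
    ring
  have hmono : Monotone (fun x => (p x ^ 2 + (f x - Real.pi) ^ 2) * Real.exp (K * x)) := by
    apply monotone_of_deriv_nonneg (fun x => (hs x).differentiableAt)
    intro x
    rw [(hs x).deriv]
    have hsinb : |Real.sin (2 * f x)| ≤ 2 * |f x - Real.pi| := by
      have : Real.sin (2 * f x) = Real.sin (2 * (f x - Real.pi)) := by
        rw [mul_sub, Real.sin_sub_two_pi]
      rw [this]
      have h2 := Real.abs_sin_le_abs (x := 2 * (f x - Real.pi))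
      rwa [abs_mul, abs_two] at h2
    have hd := d_bound ha x
    set D := 2 * x / (x ^ 2 + a ^ 2)
    set S := Real.sin (2 * f x)
    set u := f x - Real.pi
    have i1 : -(|p x| * |S|) ≤ p x * S := by rw [← abs_mul]; exact neg_abs_le _
    have i2 : -(|u| * |p x|) ≤ u * p x := by rw [← abs_mul]; exact neg_abs_le _
    have i3 : D * p x ^ 2 ≤ 1 / a * p x ^ 2 :=
      mul_le_mul_of_nonneg_right ((le_abs_self D).trans hd) (sq_nonneg _)
    have i4 : |p x| * |S| ≤ |p x| * (2 * |u|) := mul_le_mul_of_nonneg_left hsinb (abs_nonneg _)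
    have i5 : 2 * (|p x| * |u|) ≤ p x ^ 2 + u ^ 2 := by
      rw [← sq_abs (p x), ← sq_abs u]
      nlinarith [sq_nonneg (|p x| - |u|)]
    have i6 : 0 ≤ 1 / a * u ^ 2 := by positivity
    have : 0 ≤ (2 * p x * (S - D * p x) + 2 * u * p x) + (p x ^ 2 + u ^ 2) * K := by
      have : K = 3 + 2 * (1 / a) := by rw [hK]; ring
      rw [this]
      nlinarith
    have := mul_nonneg this (Real.exp_pos (K * x)).le
    nlinarith
  have hall : ∀ x, x ≤ R → f x = Real.pi := by
    intro x hx
    have h1 := hmono hx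
    simp only [hfR, hp0 R (by linarith)] at h1
    have h2 : (p x ^ 2 + (f x - Real.pi) ^ 2) * Real.exp (K * x) ≤ 0 := by simpa using h1
    have h3 : p x ^ 2 + (f x - Real.pi) ^ 2 ≤ 0 := by
      by_contra hc
      push Not at hc
      have := mul_pos hc (Real.exp_pos (K * x))
      linarith
    have : f x - Real.pi = 0 := by
      apply pow_eq_zero_iff (two_ne_zero) |>.1
      nlinarith [sq_nonneg (p x), sq_nonneg (f x - Real.pi)]
    linarith
  have : Real.pi = 0 := by
    apply tendsto_nhds_unique _ h.bot
    apply tendsto_const_nhds.congr'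
    filter_upwards [eventually_le_atBot R] with x hx using (hall x hx).symm
  exact Real.pi_pos.ne' this

theorem KinkSys.E_pos {a : ℝ} (ha : 0 < a) {f p : ℝ → ℝ} (h : KinkSys a f p)
    (r : ℝ) : 0 < p r ^ 2 - 2 * Real.sin (f r) ^ 2 := by
  rcases le_total 0 r with hr | hr
  · exact h.E_pos_right ha hr
  · have := h.refl.E_pos_right ha (r := -r) (by linarith)
    simpa using this

theorem KinkSys.p_pos {a : ℝ} (ha : 0 < a) {f p : ℝ → ℝ} (h : KinkSys a f p)
    (r : ℝ) : 0 < p r := by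
  have hne : ∀ x, p x ≠ 0 := by
    intro x hx
    have := h.E_pos ha x
    rw [hx] at this
    nlinarith [sq_nonneg (Real.sin (f x))]
  have hc : Continuous p := continuous_iff_continuousAt.2 fun x => (h.dp x).continuousAt
  by_contra hr
  have hneg : ∀ x, p x < 0 := by
    intro x
    by_contra hx
    obtain ⟨y, hy⟩ := mem_range_of_exists_le_of_exists_ge hc ⟨r, not_lt.1 hr⟩ ⟨x, not_lt.1 hx⟩
    exact hne y hy
  have hanti : Antitone f := by
    apply antitone_of_deriv_nonpos (fun x => (h.df x).differentiableAt)
    intro x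
    rw [(h.df x).deriv]
    exact (hneg x).le
  have h1 := hanti.le_of_tendsto h.top 0
  have h2 := hanti.ge_of_tendsto h.bot 0
  linarith [Real.pi_pos]

theorem KinkSys.mono {a : ℝ} (ha : 0 < a) {f p : ℝ → ℝ} (h : KinkSys a f p) : StrictMono f := by
  apply strictMono_of_deriv_pos
  intro x
  rw [(h.df x).deriv]
  exact h.p_pos ha x

theorem KinkSys.pos {a : ℝ} (ha : 0 < a) {f p : ℝ → ℝ} (h : KinkSys a f p) (r : ℝ) :
    0 < f r := by
  have h1 := (h.mono ha).monotone.le_of_tendsto h.bot (r - 1)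
  have h2 := h.mono ha (show r - 1 < r by linarith)
  linarith

theorem KinkSys.lt_pi {a : ℝ} (ha : 0 < a) {f p : ℝ → ℝ} (h : KinkSys a f p) (r : ℝ) :
    f r < Real.pi := by
  have h1 := (h.mono ha).monotone.ge_of_tendsto h.top (r + 1)
  have h2 := h.mono ha (show r < r + 1 by linarith)
  linarith

theorem KinkSys.sin_pos {a : ℝ} (ha : 0 < a) {f p : ℝ → ℝ} (h : KinkSys a f p) (r : ℝ) :
    0 < Real.sin (f r) := Real.sin_pos_of_pos_of_lt_pi (h.pos ha r) (h.lt_pi ha r)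

/-- The transformed unknown `y` with its derivative `v`. -/
theorem KinkSys.exists_yv {a : ℝ} (ha : 0 < a) {f p : ℝ → ℝ} (h : KinkSys a f p) :
    ∃ y v : ℝ → ℝ, (∀ r, f r = 2 * Real.arctan (Real.exp (y r))) ∧
      (∀ r, HasDerivAt y (v r) r) ∧
      (∀ r, HasDerivAt v ((v r ^ 2 - 2) * (-Real.cos (f r)) - 2 * r / (r ^ 2 + a ^ 2) * v r) r) ∧
      (∀ r, Real.sqrt 2 < v r) := by
  have hs := h.sin_pos ha
  have hsh : ∀ r, 0 < Real.sin (f r / 2) := fun r =>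
    Real.sin_pos_of_pos_of_lt_pi (by linarith [h.pos ha r])
      (by linarith [h.lt_pi ha r, Real.pi_pos])
  have hch : ∀ r, 0 < Real.cos (f r / 2) := fun r =>
    Real.cos_pos_of_mem_Ioo ⟨by linarith [h.pos ha r, Real.pi_pos], by linarith [h.lt_pi ha r]⟩
  have ht : ∀ r, 0 < Real.tan (f r / 2) := fun r => by
    rw [Real.tan_eq_sin_div_cos]; exact div_pos (hsh r) (hch r)
  refine ⟨fun r => Real.log (Real.tan (f r / 2)), fun r => p r / Real.sin (f r),
    fun r => ?_, fun r => ?_, fun r => ?_, fun r => ?_⟩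
  · simp only
    rw [Real.exp_log (ht r), Real.arctan_tan]
    · ring
    · linarith [h.pos ha r, Real.pi_pos]
    · linarith [h.lt_pi ha r]
  · have h1 : HasDerivAt (fun r => Real.tan (f r / 2)) (1 / Real.cos (f r / 2) ^ 2 * (p r / 2)) r :=
      HasDerivAt.comp (h₂ := Real.tan) r (Real.hasDerivAt_tan (hch r).ne') ((h.df r).div_const 2)
    refine (h1.log (ht r).ne').congr_deriv ?_
    have h2 : Real.sin (f r) = 2 * Real.sin (f r / 2) * Real.cos (f r / 2) := by
      rw [← Real.sin_two_mul]; congr 1; ring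
    simp only
    rw [h2, Real.tan_eq_sin_div_cos]
    have := (hsh r).ne'
    have := (hch r).ne'
    field_simp
  · refine ((h.dp r).div ((h.df r).sin) (hs r).ne').congr_deriv ?_
    have h1 := (hs r).ne'
    have h2 : r ^ 2 + a ^ 2 ≠ 0 := by positivity
    rw [Real.sin_two_mul]
    field_simp
    ring
  · have hE := h.E_pos ha r
    simp only
    rw [lt_div_iff₀ (hs r)]
    apply lt_of_pow_lt_pow_left₀ 2 (h.p_pos ha r).le
    rw [mul_pow, Real.sq_sqrt (by norm_num)]
    linarith

theorem right_of_deriv_pos {k : ℝ → ℝ} {k' m : ℝ} (h : HasDerivAt k k' m) (h0 : k m = 0)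
    (hk : 0 < k') : ∃ δ > 0, (∀ x, m < x → x < m + δ → 0 < k x) ∧
      (∀ x, m - δ < x → x < m → k x < 0) := by
  have h1 := (hasDerivAt_iff_tendsto_slope.1 h).eventually (lt_mem_nhds hk)
  rw [eventually_nhdsWithin_iff, Metric.eventually_nhds_iff] at h1
  obtain ⟨δ, hδ, H⟩ := h1
  refine ⟨δ, hδ, fun x hx1 hx2 => ?_, fun x hx1 hx2 => ?_⟩
  · have := H (y := x) (by rw [Real.dist_eq, abs_lt]; constructor <;> linarith) hx1.ne'
    rw [slope_def_field, h0, sub_zero] at this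
    have h3 : 0 < x - m := by linarith
    exact (div_pos_iff_of_pos_right h3).1 this
  · have := H (y := x) (by rw [Real.dist_eq, abs_lt]; constructor <;> linarith) hx2.ne
    rw [slope_def_field, h0, sub_zero] at this
    have h3 : x - m < 0 := by linarith
    by_contra hc
    have := div_nonpos_of_nonneg_of_nonpos (not_lt.1 hc) h3.le
    linarith

theorem ge_of_deriv_nonneg {g g' : ℝ → ℝ} {R : ℝ} (hg : ∀ x, R ≤ x → HasDerivAt g (g' x) x)
    (hg' : ∀ x, R ≤ x → 0 ≤ g' x) : ∀ r, R ≤ r → g R ≤ g r := by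
  intro r hr
  have hm : MonotoneOn g (Set.Ici R) := by
    apply monotoneOn_of_deriv_nonneg (convex_Ici R)
    · exact fun x hx => (hg x hx).continuousAt.continuousWithinAt
    · exact fun x hx => (hg x (interior_subset hx)).differentiableAt.differentiableWithinAt
    · intro x hx
      rw [(hg x (interior_subset hx)).deriv]
      exact hg' x (interior_subset hx)
  exact hm (Set.mem_Ici.2 le_rfl) (Set.mem_Ici.2 hr) hr

/-- Key: the kink cannot be above `π/2` at the throat. -/
theorem KinkSys.center_le {a : ℝ} (ha : 0 < a) {f p : ℝ → ℝ} (h : KinkSys a f p) :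
    f 0 ≤ Real.pi / 2 := by
  obtain ⟨y, v, hf, dy, dv, hv⟩ := h.exists_yv ha
  by_contra hc
  push Not at hc
  have hs2 : (1.4 : ℝ) < Real.sqrt 2 := by
    apply Real.lt_sqrt_of_sq_lt; norm_num
  have hv1 : ∀ r, 1.4 < v r := fun r => hs2.trans (hv r)
  have hv2 : ∀ r, 0 < v r ^ 2 - 2 := by
    intro r
    have := pow_lt_pow_left₀ (hv r) (Real.sqrt_nonneg 2) two_ne_zero
    rw [Real.sq_sqrt (by norm_num)] at this
    linarith
  set w : ℝ → ℝ := fun r => y r + y (-r) with hw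
  set k : ℝ → ℝ := fun r => v r - v (-r) with hk
  set D : ℝ → ℝ := fun r => 2 * r / (r ^ 2 + a ^ 2) with hD
  have dw : ∀ r, HasDerivAt w (k r) r := by
    intro r
    have h1 : HasDerivAt (fun r => y (-r)) (v (-r) * (-1)) r :=
      (dy (-r)).comp r (hasDerivAt_neg r)
    refine ((dy r).add h1).congr_deriv ?_
    simp only [hk]; ring
  have dk : ∀ r, HasDerivAt k ((v r ^ 2 - 2) * (-Real.cos (f r) - Real.cos (f (-r)))
      + Real.cos (f (-r)) * (v r + v (-r)) * k r - D r * k r) r := by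
    intro r
    have h1 : HasDerivAt (fun r => v (-r)) (((v (-r) ^ 2 - 2) * (-Real.cos (f (-r))) -
        2 * (-r) / ((-r) ^ 2 + a ^ 2) * v (-r)) * (-1)) r :=
      (dv (-r)).comp r (hasDerivAt_neg r)
    refine ((dv r).sub h1).congr_deriv ?_
    simp only [hk, hD, neg_sq]; ring
  have hC : ∀ r, 0 < w r → 0 < -Real.cos (f r) - Real.cos (f (-r)) := by
    intro r hr
    have h1 : Real.arctan (Real.exp (-y (-r))) < Real.arctan (Real.exp (y r)) :=
      Real.arctan_strictMono (Real.exp_strictMono (by simp only [hw] at hr; linarith))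
    rw [Real.exp_neg, Real.arctan_inv_of_pos (Real.exp_pos _)] at h1
    have h2 : Real.pi - f (-r) < f r := by
      rw [hf r, hf (-r)]; linarith
    have h3 := Real.cos_lt_cos_of_nonneg_of_le_pi (x := Real.pi - f (-r)) (y := f r)
      (by linarith [h.lt_pi ha (-r)]) (h.lt_pi ha r).le h2
    rw [Real.cos_pi_sub] at h3
    linarith
  have hw0 : 0 < w 0 := by
    have h1 : Real.arctan (Real.exp 0) < Real.arctan (Real.exp (y 0)) := by
      rw [Real.exp_zero, Real.arctan_one]
      have := hf 0
      linarith
    have h2 := Real.exp_lt_exp.1 (Real.arctan_strictMono.lt_iff_lt.1 h1)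
    simp only [hw, neg_zero]; linarith
  have hk0 : k 0 = 0 := by simp [hk]
  have hw_cont : Continuous w := continuous_iff_continuousAt.2 fun x => (dw x).continuousAt
  have hk'pos : ∀ m, 0 < w m → k m = 0 → ∃ δ > 0, (∀ x, m < x → x < m + δ → 0 < k x) ∧
      (∀ x, m - δ < x → x < m → k x < 0) := by
    intro m hm hkm
    refine right_of_deriv_pos (dk m) hkm ?_
    rw [hkm]
    have := mul_pos (hv2 m) (hC m hm)
    linarith
  have hkpos : ∀ r, 0 < r → 0 < k r := by
    intro R hR
    by_contra hneg
    push Not at hneg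
    obtain ⟨m, hm, hmax⟩ := isCompact_Icc.exists_isMaxOn (Set.nonempty_Icc.2 hR.le)
      hw_cont.continuousOn (s := Set.Icc 0 R)
    have hwm : 0 < w m := lt_of_lt_of_le hw0 (hmax ⟨le_rfl, hR.le⟩)
    -- if m < R then derivative positive on the right is impossible
    have hright : m < R → k m = 0 → False := by
      intro hmR hkm
      obtain ⟨δ, hδ, H, -⟩ := hk'pos m hwm hkm
      have hlt : m < min R (m + δ / 2) := lt_min hmR (by linarith)
      obtain ⟨c, hc, hceq⟩ := exists_hasDerivAt_eq_slope w k hlt hw_cont.continuousOn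
        (fun x _ => dw x)
      have hle1 := min_le_left R (m + δ / 2)
      have hle2 := min_le_right R (m + δ / 2)
      have hkc := H c hc.1 (by linarith [hc.2])
      have := hmax (a := min R (m + δ / 2)) ⟨hm.1.trans hlt.le, hle1⟩
      have h2 : w (min R (m + δ / 2)) ≤ w m := this
      have : (w (min R (m + δ / 2)) - w m) / (min R (m + δ / 2) - m) ≤ 0 :=
        div_nonpos_of_nonpos_of_nonneg (by linarith) (by linarith)
      linarith
    have hleft : m = R → k m = 0 → False := by
      intro hmR hkm
      obtain ⟨δ, hδ, -, H⟩ := hk'pos m hwm hkm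
      have hlt : max 0 (m - δ / 2) < m := max_lt (by linarith) (by linarith)
      obtain ⟨c, hc, hceq⟩ := exists_hasDerivAt_eq_slope w k hlt hw_cont.continuousOn
        (fun x _ => dw x)
      have hle1 := le_max_left 0 (m - δ / 2)
      have hle2 := le_max_right 0 (m - δ / 2)
      have hkc := H c (by linarith [hc.1]) hc.2
      have h2 : w (max 0 (m - δ / 2)) ≤ w m := hmax ⟨hle1, hlt.le.trans hm.2⟩
      have : 0 ≤ (w m - w (max 0 (m - δ / 2))) / (m - max 0 (m - δ / 2)) :=
        div_nonneg (by linarith) (by linarith)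
      linarith
    rcases hm.2.lt_or_eq with hlt | heq
    · rcases hm.1.lt_or_eq with hlt0 | heq0
      · refine hright hlt ?_
        have hloc : IsLocalMax w m := hmax.isLocalMax (Icc_mem_nhds hlt0 hlt)
        exact hloc.hasDerivAt_eq_zero (dw m)
      · exact hright hlt (heq0 ▸ hk0)
    · rcases hneg.lt_or_eq with hk1 | hk1
      · -- negative derivative at the right endpoint
        have hkc : Continuous k := continuous_iff_continuousAt.2 fun x => (dk x).continuousAt
        have hev := hkc.continuousAt.eventually (gt_mem_nhds hk1)
        rw [Metric.eventually_nhds_iff] at hev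
        obtain ⟨δ, hδ, H⟩ := hev
        have hlt : max 0 (R - δ / 2) < R := max_lt (by linarith) (by linarith)
        obtain ⟨c, hc, hceq⟩ := exists_hasDerivAt_eq_slope w k hlt hw_cont.continuousOn
          (fun x _ => dw x)
        have hle1 := le_max_left 0 (R - δ / 2)
        have hle2 := le_max_right 0 (R - δ / 2)
        have hkc := H (y := c) (by
          rw [Real.dist_eq, abs_lt]; constructor <;> linarith [hc.1, hc.2])
        have h2 : w (max 0 (R - δ / 2)) ≤ w m := hmax ⟨hle1, hlt.le⟩
        rw [heq] at h2
        have : 0 ≤ (w R - w (max 0 (R - δ / 2))) / (R - max 0 (R - δ / 2)) :=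
          div_nonneg (by linarith) (by linarith)
        linarith
      · exact hleft heq (heq ▸ hk1)
  have hwpos : ∀ r, 0 ≤ r → 0 < w r := by
    intro r hr
    have hm : MonotoneOn w (Set.Ici 0) := by
      apply monotoneOn_of_deriv_nonneg (convex_Ici 0) hw_cont.continuousOn
      · exact fun x _ => (dw x).differentiableAt.differentiableWithinAt
      · intro x hx
        rw [interior_Ici] at hx
        rw [(dw x).deriv]
        exact (hkpos x hx).le
    exact lt_of_lt_of_le hw0 (hm (Set.mem_Ici.2 le_rfl) (Set.mem_Ici.2 hr) hr)
  have hDle : ∀ r, 2 ≤ r → D r ≤ 1 := by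
    intro r hr
    simp only [hD]
    rw [div_le_one (by positivity)]
    nlinarith [sq_nonneg a]
  -- large radius behaviour
  have hcb : Tendsto (fun r => Real.cos (f (-r))) atTop (nhds 1) := by
    have := (Real.continuous_cos.tendsto 0).comp (h.bot.comp tendsto_neg_atTop_atBot)
    rw [Real.cos_zero] at this
    exact this
  have hct : Tendsto (fun r => -Real.cos (f r)) atTop (nhds 1) := by
    have := ((Real.continuous_cos.tendsto Real.pi).comp h.top).neg
    rw [Real.cos_pi, neg_neg] at this
    exact this
  obtain ⟨R₀, hR₀⟩ := eventually_atTop.1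
    ((hcb.eventually (lt_mem_nhds (show (3 / 4 : ℝ) < 1 by norm_num))).and
      (hct.eventually (lt_mem_nhds (show (3 / 4 : ℝ) < 1 by norm_num))))
  set R := max R₀ 2 with hR
  have hR2 : 2 ≤ R := le_max_right _ _
  have hR0 : R₀ ≤ R := le_max_left _ _
  set k' : ℝ → ℝ := fun r => (v r ^ 2 - 2) * (-Real.cos (f r) - Real.cos (f (-r)))
      + Real.cos (f (-r)) * (v r + v (-r)) * k r - D r * k r with hk'
  have hk'k : ∀ r, R ≤ r → k r ≤ k' r := by
    intro r hr
    have hr2 : 2 ≤ r := hR2.trans hr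
    have i1 := mul_pos (hv2 r) (hC r (hwpos r (by linarith)))
    have i2 := (hR₀ r (hR0.trans hr)).1
    have i3 := hkpos r (by linarith)
    have i4 : 2.1 ≤ Real.cos (f (-r)) * (v r + v (-r)) := by
      nlinarith [hv1 r, hv1 (-r)]
    have i5 := mul_le_mul_of_nonneg_right i4 i3.le
    have i6 := mul_le_mul_of_nonneg_right (hDle r hr2) i3.le
    simp only [hk']
    linarith
  have hkR : 0 < k R := hkpos R (by linarith)
  have hkge : ∀ r, R ≤ r → k R ≤ k r :=
    ge_of_deriv_nonneg (fun x _ => dk x) (fun x hx =>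
      (hkpos x (by linarith)).le.trans (hk'k x hx))
  have hklin : ∀ r, R ≤ r → k R - k R * R ≤ k r - k R * r := by
    refine ge_of_deriv_nonneg (g := fun r => k r - k R * r) (g' := fun r => k' r - k R * 1)
      (fun x _ => (dk x).sub ((hasDerivAt_id x).const_mul (k R))) (fun x hx => ?_)
    have := hkge x hx
    have := hk'k x hx
    linarith
  set S := R + 6 / k R with hS
  have h6 : 0 < 6 / k R := by positivity
  have hv6 : ∀ r, S ≤ r → 6 ≤ v r := by
    intro r hr
    have i1 := hklin r (by linarith)
    have i2 : k R * (6 / k R) = 6 := by field_simp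
    have i3 : k R * S ≤ k R * r := mul_le_mul_of_nonneg_left hr hkR.le
    have i4 : k r = v r - v (-r) := rfl
    have i5 := hv1 (-r)
    rw [hS, mul_add, i2] at i3
    linarith
  have hfin := ge_of_deriv_nonneg (R := S) (g := fun r => -(v r)⁻¹ - r * (1 / 4))
    (g' := fun r => -(-((v r ^ 2 - 2) * (-Real.cos (f r)) - 2 * r / (r ^ 2 + a ^ 2) * v r)
      / v r ^ 2) - 1 * (1 / 4))
    (fun x _ => (((dv x).inv (by linarith [hv1 x])).neg).sub ((hasDerivAt_id x).mul_const (1 / 4)))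
    (fun x hx => by
      have i1 := hv6 x hx
      have i2 := (hR₀ x (by linarith)).2
      have i3 := hDle x (by linarith)
      simp only [hD] at i3
      have i4 := mul_le_mul_of_nonneg_right i3 (show 0 ≤ v x by linarith)
      have i5 := mul_le_mul_of_nonneg_left i2.le (hv2 x).le
      have i6 : 1 / 4 ≤ ((v x ^ 2 - 2) * (-Real.cos (f x)) - 2 * x / (x ^ 2 + a ^ 2) * v x)
          / v x ^ 2 := by
        rw [le_div_iff₀ (by positivity)]
        nlinarith
      rw [neg_div]
      linarith) (S + 4) (by linarith)
  have j1 : (v S)⁻¹ ≤ 1 := inv_le_one_of_one_le₀ (by linarith [hv6 S le_rfl])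
  have j1' : (v S)⁻¹ < 1 := inv_lt_one_of_one_lt₀ (by linarith [hv6 S le_rfl])
  have j2 : 0 < (v (S + 4))⁻¹ := inv_pos.2 (by linarith [hv1 (S + 4)])
  linarith

theorem one_kink_above_H (a : ℝ) (ha : 0 < a) (φ₁ H : ℝ → ℝ)
    (hH : ∀ r, H r = 2 * Real.arctan (Real.exp (Real.sqrt 2 * r)))
    (hφ : ContDiff ℝ 2 φ₁)
    (hφeq : ∀ r : ℝ, deriv (deriv φ₁) r + (2 * r / (r ^ 2 + a ^ 2)) * deriv φ₁ r
        = Real.sin (2 * φ₁ r))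
    (hbot : Tendsto φ₁ atBot (nhds 0))
    (htop : Tendsto φ₁ atTop (nhds Real.pi)) :
    (∀ r : ℝ, 0 < r → H r < φ₁ r) ∧ (∀ r : ℝ, r < 0 → φ₁ r < H r) := by
  have h : KinkSys a φ₁ (deriv φ₁) := by
    have hd : ContDiff ℝ 1 (deriv φ₁) := ((contDiff_succ_iff_deriv (n := 1)).1 hφ).2.2
    refine ⟨fun r => (hφ.differentiable (by norm_num) r).hasDerivAt, fun r => ?_, hbot, htop⟩
    refine (hd.differentiable (by norm_num) r).hasDerivAt.congr_deriv ?_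
    rw [← hφeq r]
    ring
  have hc : φ₁ 0 = Real.pi / 2 := by
    have h1 := h.center_le ha
    have h2 := h.refl.center_le ha
    simp only [neg_zero] at h2
    linarith
  obtain ⟨y, v, hf, dy, -, hv⟩ := h.exists_yv ha
  have hy0 : y 0 = 0 := by
    have h1 := hf 0
    have h2 : Real.arctan (Real.exp (y 0)) = Real.arctan (Real.exp 0) := by
      rw [Real.exp_zero, Real.arctan_one]
      linarith
    exact Real.exp_injective (Real.arctan_injective h2)
  have hmono : StrictMono (fun r => y r - Real.sqrt 2 * r) := by
    apply strictMono_of_deriv_pos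
    intro x
    have h1 : HasDerivAt (fun r => y r - Real.sqrt 2 * r) (v x - Real.sqrt 2 * 1) x :=
      (dy x).sub ((hasDerivAt_id x).const_mul (Real.sqrt 2))
    rw [h1.deriv]
    linarith [hv x]
  constructor
  · intro r hr
    have h1 := hmono hr
    simp only [hy0, mul_zero, sub_zero] at h1
    rw [hH, hf]
    have := Real.arctan_strictMono (Real.exp_strictMono (show Real.sqrt 2 * r < y r by linarith))
    linarith
  · intro r hr
    have h1 := hmono hr
    simp only [hy0, mul_zero, sub_zero] at h1
    rw [hH, hf]
    have := Real.arctan_strictMono (Real.exp_strictMono (show y r < Real.sqrt 2 * r by linarith))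
    linarith
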